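/- arXiv:2411.13166 — 2 statements merged into one kernel-verified Lean document; each statement's English description precedes it below -/
import Mathlib

section
/- For every natural number n and every real θ > 0, ∫_{−1}^{1} P_n(x) e^{−iθx} dx = 2 (−i)^n j_n(θ), where P_n is the Legendre polynomial and j_n is the spherical Bessel function of the first kind given by Rayleigh's formula. -/
open MeasureTheory

/-- The Legendre polynomial `P n`, defined by Rodrigues' formula
`P_n(x) = (1/(2^n n!)) (d/dx)^n ((x² − 1)^n)`. -/
noncomputable def legendre (n : ℕ) (x : ℝ) : ℝ :=
  (1 / ((2 : ℝ) ^ n * n.factorial)) * iteratedDeriv n (fun y : ℝ => (y ^ 2 - 1) ^ n) x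

/-- The spherical Bessel function of the first kind, defined by Rayleigh's formula
`j_n(θ) = (−θ)^n ((1/θ) d/dθ)^n (sin θ / θ)`. -/
noncomputable def sphericalBessel (n : ℕ) (θ : ℝ) : ℝ :=
  (-θ) ^ n * ((fun f : ℝ → ℝ => fun t : ℝ => deriv f t / t)^[n]
    (fun t : ℝ => Real.sin t / t)) θ

/-! With `w n = (x² - 1)^n / (2^n n!)` one has `P_n = (w n)^{(n)}` and `(w (n + 1))' = x * w n`. Put
`W n z = ∫_{-1}^{1} w n x * e^{-izx} dx`. Integrating by parts `n` times turns the integral of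
`P_n(x) e^{-izx}` into `(iz)^n * W n z`. Differentiating under the integral sign and integrating by
parts once gives `(W n)' z = z * W (n + 1) z`, so that Rayleigh's operator `(1/z) d/dz` maps `W n`
to `W (n + 1)`, starting from `W 0 z = 2 sin z / z`. -/

section Polynomial

open Polynomial

lemma iteratedDeriv_polynomial_eval {𝕜 : Type*} [NontriviallyNormedField 𝕜] (p : 𝕜[X]) (n : ℕ) :
    iteratedDeriv n (fun x => p.eval x) = fun x => (derivative^[n] p).eval x := by
  induction n with
  | zero => simp
  | succ n ih =>
    ext x
    rw [iteratedDeriv_succ, ih, Polynomial.deriv, Function.iterate_succ_apply']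

lemma isRoot_iterate_derivative_pow {R : Type*} [CommSemiring R] {p : R[X]} {a : R}
    (ha : p.IsRoot a) {k n : ℕ} (hk : k < n) : (derivative^[k] (p ^ n)).IsRoot a :=
  ha.dvd ((dvd_pow_self p (Nat.sub_ne_zero_of_lt hk)).trans
    (pow_sub_dvd_iterate_derivative_pow p n k))

end Polynomial

section ExponentialIntegral

open Polynomial

variable {a b : ℝ}

lemma integral_deriv_mul_cexp_of_eq_zero {f f' : ℝ → ℂ}
    (hf : ∀ x ∈ Set.uIcc a b, HasDerivAt f (f' x) x) (hf' : IntervalIntegrable f' volume a b)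
    (ha : f a = 0) (hb : f b = 0) (c : ℂ) :
    ∫ x in a..b, f' x * Complex.exp (c * x) = -c * ∫ x in a..b, f x * Complex.exp (c * x) := by
  have hexp (x : ℝ) :
      HasDerivAt (fun y : ℝ => Complex.exp (c * y)) (c * Complex.exp (c * x)) x := by
    simpa [mul_comm] using ((hasDerivAt_id (x : ℂ)).const_mul c).cexp.comp_ofReal
  have hparts := intervalIntegral.integral_mul_deriv_eq_deriv_mul (fun x _ => hexp x) hf
    (Continuous.intervalIntegrable (by fun_prop) a b) hf'
  simpa [ha, hb, mul_comm, mul_left_comm, ← intervalIntegral.integral_const_mul] using hparts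

lemma integral_iterate_derivative_eval_mul_cexp {p : ℝ[X]} {n : ℕ}
    (ha : ∀ k < n, (derivative^[k] p).IsRoot a) (hb : ∀ k < n, (derivative^[k] p).IsRoot b)
    (c : ℂ) :
    ∫ x in a..b, (((derivative^[n] p).eval x : ℝ) : ℂ) * Complex.exp (c * x)
      = (-c) ^ n * ∫ x in a..b, ((p.eval x : ℝ) : ℂ) * Complex.exp (c * x) := by
  induction n with
  | zero => simp
  | succ n ih =>
    rw [Function.iterate_succ_apply', integral_deriv_mul_cexp_of_eq_zero
        (fun x _ => ((derivative^[n] p).hasDerivAt x).ofReal_comp)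
        (Continuous.intervalIntegrable (by fun_prop) a b)
        (by simp [(ha n n.lt_succ_self).eq_zero]) (by simp [(hb n n.lt_succ_self).eq_zero]),
      ih (fun k hk => ha k (hk.trans n.lt_succ_self)) (fun k hk => hb k (hk.trans n.lt_succ_self)),
      pow_succ', mul_assoc]

lemma hasDerivAt_integral_mul_cexp {f : ℝ → ℂ} (hf : IntervalIntegrable f volume a b) (c : ℂ) :
    HasDerivAt (fun c : ℂ => ∫ x in a..b, f x * Complex.exp (c * x))
      (∫ x in a..b, x * f x * Complex.exp (c * x)) c := by
  have hderiv (d : ℂ) (x : ℝ) : HasDerivAt (fun d : ℂ => f x * Complex.exp (d * x))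
      (x * f x * Complex.exp (d * x)) d := by
    simpa [mul_comm, mul_left_comm] using
      (((hasDerivAt_id d).mul_const (x : ℂ)).cexp).const_mul (f x)
  have hbound (x : ℝ) (d : ℂ) (hd : d ∈ Metric.ball c 1) :
      ‖x * f x * Complex.exp (d * x)‖ ≤ ‖x * f x‖ * Real.exp ((‖c‖ + 1) * ‖x‖) := by
    have hd' : ‖d‖ ≤ ‖c‖ + 1 := by
      linarith [norm_le_norm_add_norm_sub' d c, mem_ball_iff_norm.mp hd]
    calc ‖x * f x * Complex.exp (d * x)‖
        ≤ ‖x * f x‖ * Real.exp ‖d * x‖ := by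
          rw [norm_mul]; gcongr; exact Complex.norm_exp_le_exp_norm _
      _ ≤ ‖x * f x‖ * Real.exp ((‖c‖ + 1) * ‖x‖) := by
          rw [norm_mul d, Complex.norm_real]; gcongr
  have hint (d : ℂ) : IntervalIntegrable (fun x => f x * Complex.exp (d * x)) volume a b :=
    hf.mul_continuousOn (by fun_prop)
  have hxf : IntervalIntegrable (fun x => x * f x) volume a b :=
    hf.continuousOn_mul (by fun_prop)
  exact (intervalIntegral.hasDerivAt_integral_of_dominated_loc_of_deriv_le
    (Metric.ball_mem_nhds c one_pos)
    (.of_forall fun d => (hint d).def'.aestronglyMeasurable)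
    (hint c)
    (hxf.mul_continuousOn (by fun_prop)).def'.aestronglyMeasurable
    (.of_forall fun x _ => hbound x)
    (hxf.norm.mul_continuousOn (by fun_prop))
    (.of_forall fun x _ d _ => hderiv d x)).2

end ExponentialIntegral

section Rodrigues

open Polynomial

/-- The polynomial `(X² - 1)^n / (2^n n!)`, whose `n`-th derivative is the Legendre polynomial
`P_n` by Rodrigues' formula. -/
noncomputable def rodriguesPolynomial (n : ℕ) : ℝ[X] :=
  C (1 / (2 ^ n * n.factorial : ℝ)) * (X ^ 2 - 1) ^ n

lemma legendre_eq_eval_iterate_derivative (n : ℕ) (x : ℝ) :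
    legendre n x = (derivative^[n] (rodriguesPolynomial n)).eval x := by
  have heval : (fun y : ℝ => (y ^ 2 - 1) ^ n) = fun y => ((X ^ 2 - 1) ^ n : ℝ[X]).eval y := by
    simp
  rw [legendre, heval, iteratedDeriv_polynomial_eval, rodriguesPolynomial,
    iterate_derivative_C_mul, eval_C_mul]

lemma isRoot_iterate_derivative_rodriguesPolynomial {x : ℝ} (hx : x ^ 2 = 1) {k n : ℕ}
    (hk : k < n) : (derivative^[k] (rodriguesPolynomial n)).IsRoot x := by
  have hroot : (X ^ 2 - 1 : ℝ[X]).IsRoot x := by simp [hx]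
  rw [rodriguesPolynomial, iterate_derivative_C_mul]
  exact (isRoot_iterate_derivative_pow hroot hk).dvd (dvd_mul_left _ _)

lemma derivative_rodriguesPolynomial_succ (n : ℕ) :
    derivative (rodriguesPolynomial (n + 1)) = X * rodriguesPolynomial n := by
  have hcoeff : (1 / (2 ^ (n + 1) * (n + 1).factorial) : ℝ) * ((n + 1) * 2)
      = 1 / (2 ^ n * n.factorial) := by
    rw [Nat.factorial_succ]; push_cast; field_simp; ring
  have hpow : derivative ((X ^ 2 - 1) ^ (n + 1) : ℝ[X])
      = C ((n + 1) * 2 : ℝ) * (X * (X ^ 2 - 1) ^ n) := by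
    rw [derivative_pow_succ]
    simp only [derivative_sub, derivative_X_sq, derivative_one, sub_zero, C_mul]
    ring
  rw [rodriguesPolynomial, rodriguesPolynomial, derivative_C_mul, hpow, ← mul_assoc, ← C_mul,
    hcoeff, mul_left_comm]

end Rodrigues

section PoissonIntegral

open Polynomial

/-- The integral `∫_{-1}^{1} (x² - 1)^n / (2^n n!) e^{-izx} dx`: Poisson's integral for the
spherical Bessel function `j_n(z)`, normalized without the factor `(-z)^n / 2`. -/
noncomputable def poissonIntegral (n : ℕ) (z : ℂ) : ℂ :=
  ∫ x in (-1 : ℝ)..1, (((rodriguesPolynomial n).eval x : ℝ) : ℂ) * Complex.exp (-Complex.I * z * x)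

lemma integral_iterate_derivative_rodriguesPolynomial_mul_cexp {k n : ℕ} (hk : k ≤ n) (z : ℂ) :
    ∫ x in (-1 : ℝ)..1, (((derivative^[k] (rodriguesPolynomial n)).eval x : ℝ) : ℂ)
        * Complex.exp (-Complex.I * z * x)
      = (Complex.I * z) ^ k * poissonIntegral n z := by
  rw [integral_iterate_derivative_eval_mul_cexp, poissonIntegral, neg_mul, neg_neg]
  all_goals
    exact fun j hj => isRoot_iterate_derivative_rodriguesPolynomial (by norm_num) (hj.trans_le hk)

lemma integral_legendre_mul_cexp (n : ℕ) (z : ℂ) :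
    ∫ x in (-1 : ℝ)..1, (legendre n x : ℂ) * Complex.exp (-Complex.I * z * x)
      = (Complex.I * z) ^ n * poissonIntegral n z := by
  simp only [legendre_eq_eval_iterate_derivative,
    integral_iterate_derivative_rodriguesPolynomial_mul_cexp le_rfl]

lemma hasDerivAt_poissonIntegral (n : ℕ) (z : ℂ) :
    HasDerivAt (poissonIntegral n) (z * poissonIntegral (n + 1) z) z := by
  have hint : IntervalIntegrable
      (fun x : ℝ => (((rodriguesPolynomial n).eval x : ℝ) : ℂ)) volume (-1) 1 :=
    Continuous.intervalIntegrable (by fun_prop) _ _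
  have hparts : ∫ x in (-1 : ℝ)..1, x * (((rodriguesPolynomial n).eval x : ℝ) : ℂ)
        * Complex.exp (-Complex.I * z * x) = Complex.I * z * poissonIntegral (n + 1) z := by
    simpa [derivative_rodriguesPolynomial_succ] using
      integral_iterate_derivative_rodriguesPolynomial_mul_cexp (Nat.le_add_left 1 n) z
  have hderiv := (hasDerivAt_integral_mul_cexp hint (-Complex.I * z)).comp z
    ((hasDerivAt_id z).const_mul (-Complex.I))
  refine hderiv.congr_deriv ?_
  rw [hparts]
  linear_combination -(z * poissonIntegral (n + 1) z) * Complex.I_mul_I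

lemma poissonIntegral_zero {z : ℂ} (hz : z ≠ 0) :
    poissonIntegral 0 z = 2 * (Complex.sin z / z) := by
  calc poissonIntegral 0 z
      = ∫ x in (-1 : ℝ)..1, Complex.exp (-Complex.I * z * x) := by
        simp [poissonIntegral, rodriguesPolynomial]
    _ = (Complex.exp (-z * Complex.I) - Complex.exp (z * Complex.I)) / (-Complex.I * z) := by
        rw [integral_exp_mul_complex (by simp [hz])]
        simp [mul_comm]
    _ = (Complex.exp (-z * Complex.I) - Complex.exp (z * Complex.I)) * Complex.I / z := by
        rw [← div_div, div_neg, Complex.div_I, neg_neg]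
    _ = 2 * (Complex.sin z / z) := by rw [← Complex.two_sin, mul_div_assoc]

end PoissonIntegral

section Rayleigh

lemma ofReal_deriv_eq_of_hasDerivAt_ofReal {f : ℝ → ℝ} {f' : ℂ} {t : ℝ}
    (hf : HasDerivAt (fun s => (f s : ℂ)) f' t) : ((deriv f t : ℝ) : ℂ) = f' := by
  have hre : HasDerivAt f f'.re t := Complex.reCLM.hasFDerivAt.comp_hasDerivAt t hf
  rw [hre.deriv, hre.ofReal_comp.unique hf]

lemma ofReal_iterate_deriv_div_eq {f : ℝ → ℝ} {g : ℕ → ℝ → ℂ} (hf : ∀ t ≠ 0, (f t : ℂ) = g 0 t)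
    (hg : ∀ n, ∀ t ≠ 0, HasDerivAt (g n) (t * g (n + 1) t) t) (n : ℕ) {t : ℝ} (ht : t ≠ 0) :
    ((fun h : ℝ → ℝ => fun s : ℝ => deriv h s / s)^[n] f t : ℂ) = g n t := by
  induction n generalizing t with
  | zero => exact hf t ht
  | succ n ih =>
    have hderiv := (hg n t ht).congr_of_eventuallyEq
      ((eventually_ne_nhds ht).mono fun s hs => ih hs)
    rw [Function.iterate_succ_apply', Complex.ofReal_div,
      ofReal_deriv_eq_of_hasDerivAt_ofReal hderiv,
      mul_div_cancel_left₀ _ (Complex.ofReal_ne_zero.mpr ht)]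

lemma two_mul_sphericalBessel_eq_poissonIntegral (n : ℕ) {θ : ℝ} (hθ : θ ≠ 0) :
    2 * (sphericalBessel n θ : ℂ) = (-θ) ^ n * poissonIntegral n θ := by
  have hiter := ofReal_iterate_deriv_div_eq (f := fun t => Real.sin t / t)
    (g := fun n t => poissonIntegral n t / 2)
    (fun t ht => by simp [poissonIntegral_zero (Complex.ofReal_ne_zero.mpr ht)])
    (fun n t _ => by
      simpa [mul_div_assoc] using (hasDerivAt_poissonIntegral n t).comp_ofReal.div_const 2)
    n hθ
  rw [sphericalBessel, Complex.ofReal_mul, hiter]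
  push_cast
  ring

end Rayleigh

theorem legendre_fourier_sphericalBessel_general (n : ℕ) {θ : ℝ} (hθ : θ ≠ 0) :
    (∫ x in (-1 : ℝ)..1, (legendre n x : ℂ) * Complex.exp (-Complex.I * θ * x))
      = 2 * (-Complex.I) ^ n * (sphericalBessel n θ : ℂ) := by
  calc _ = (Complex.I * θ) ^ n * poissonIntegral n θ := integral_legendre_mul_cexp n θ
    _ = (-Complex.I) ^ n * ((-θ) ^ n * poissonIntegral n θ) := by
      rw [← mul_assoc, ← mul_pow, neg_mul_neg]
    _ = (-Complex.I) ^ n * (2 * sphericalBessel n θ) := by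
      rw [two_mul_sphericalBessel_eq_poissonIntegral n hθ]
    _ = _ := by ring

/-- For every `n` and every `θ > 0`,
`∫_{−1}^{1} P_n(x) e^{−iθx} dx = 2 (−i)^n j_n(θ)`. -/
theorem legendre_fourier_sphericalBessel (n : ℕ) (θ : ℝ) (hθ : 0 < θ) :
    (∫ x in (-1 : ℝ)..1, (legendre n x : ℂ) * Complex.exp (-Complex.I * θ * x))
      = 2 * (-Complex.I) ^ n * (sphericalBessel n θ : ℂ) :=
  legendre_fourier_sphericalBessel_general n hθ.ne'
end

section
/- Let f : ℝ → ℂ be a Schwartz function and let f̂(ω) = ∫_ℝ f(t) e^{−iωt} dt denote its Fourier transform. Then for every fixed natural number n, lim_{ω_c → ∞} ∫_ℝ f(t) (∫₀^{ω_c} P_n(2ω/ω_c − 1) e^{−iωt} dω) dt = (−1)^n ∫₀^∞ f̂(ω) dω. In particular, the flat-spectral-density chain coupling γ_n^M, tested against f, concentrates in the large-cutoff limit at t = 0 (the limit of the interaction times t_n = nπ/ω_c). -/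
open MeasureTheory Filter

/-!
By Fubini, the coupling tested against `f` equals `∫₀^{ω_c} P_n(2ω/ω_c − 1) f̂(ω) dω`. As
`ω_c → ∞`, the dilated profile stays bounded and tends pointwise to `P_n(−1) = (−1)^n`, so dominated
convergence with the integrable majorant `C |f̂|` gives the limit.
-/

open Set Topology
open scoped FourierTransform SchwartzMap

theorem iteratedDeriv_sub_pow_mul_self {𝕜 : Type*} [NontriviallyNormedField 𝕜] {n : ℕ} {z : 𝕜}
    {f : 𝕜 → 𝕜} (hf : ContDiffAt 𝕜 n f z) :
    iteratedDeriv n (fun y => (y - z) ^ n * f y) z = n.factorial * f z := by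
  have hpow (i : ℕ) :
      iteratedDeriv i (fun y => (y - z) ^ n) z = if i = n then (n.factorial : 𝕜) else 0 := by
    rw [congrFun (iteratedDeriv_comp_sub_const i (· ^ n) z) z, sub_self,
      iteratedDeriv_fun_pow_zero, Nat.cast_ite, Nat.cast_zero]
  rw [iteratedDeriv_fun_mul (by fun_prop) hf]
  simp [hpow]

theorem continuous_legendre (n : ℕ) : Continuous (legendre n) := by
  have h : ContDiff ℝ n (fun y : ℝ => (y ^ 2 - 1) ^ n) := by fun_prop
  exact (h.continuous_iteratedDeriv n le_rfl).const_mul _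

theorem legendre_neg_one (n : ℕ) : legendre n (-1) = (-1) ^ n := by
  have hfactor : (fun y : ℝ => (y ^ 2 - 1) ^ n) = fun y => (y - -1) ^ n * (y - 1) ^ n := by
    funext y
    rw [← mul_pow]
    ring
  have hpow : (-1 - 1 : ℝ) ^ n = (-1) ^ n * 2 ^ n := by
    rw [← mul_pow]
    norm_num
  have hfactorial : (n.factorial : ℝ) ≠ 0 := by exact_mod_cast n.factorial_ne_zero
  rw [legendre, hfactor, iteratedDeriv_sub_pow_mul_self (by fun_prop), hpow]
  field_simp

/-- The coupling `γ_n^M(t)`, up to a constant factor, of the system to mode `n` of the chain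
representing an environment with flat spectral density on `[0, ωc]`. -/
noncomputable def chainCoupling (n : ℕ) (ωc t : ℝ) : ℂ :=
  ∫ ω in (0 : ℝ)..ωc, (legendre n (2 * ω / ωc - 1) : ℂ) * Complex.exp (-Complex.I * ω * t)

theorem mapsTo_div_Icc_Icc_zero_one {K : Type*} [Field K] [LinearOrder K] [IsStrictOrderedRing K]
    (R : K) : MapsTo (· / R) (Icc 0 R) (Icc 0 1) := fun _ hx =>
  ⟨div_nonneg hx.1 (hx.1.trans hx.2), div_le_one_of_le₀ hx.2 (hx.1.trans hx.2)⟩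

theorem tendsto_indicator_Ioc_comp_div_smul {M X : Type*} [TopologicalSpace M]
    [TopologicalSpace X] [Zero X] [SMul M X] [ContinuousSMul M X] {φ : ℝ → M} {x : ℝ}
    (hφ : ContinuousWithinAt φ (Icc 0 1) 0) (h : ℝ → X) (hx : 0 < x) :
    Tendsto (fun R => (Ioc 0 R).indicator (fun y => φ (y / R) • h y) x) atTop
      (𝓝 (φ 0 • h x)) := by
  have hdiv : Tendsto (x / ·) atTop (𝓝[Icc 0 1] 0) := by
    refine tendsto_nhdsWithin_iff.2 ⟨tendsto_const_nhds.div_atTop tendsto_id, ?_⟩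
    filter_upwards [eventually_ge_atTop x] with R hR
    exact mapsTo_div_Icc_Icc_zero_one R ⟨hx.le, hR⟩
  refine ((hφ.tendsto.comp hdiv).smul_const (h x)).congr' ?_
  filter_upwards [eventually_ge_atTop x] with R hR
  rw [indicator_of_mem (show x ∈ Ioc 0 R from ⟨hx, hR⟩), Function.comp_apply]

theorem tendsto_intervalIntegral_comp_div_smul {𝕜 E : Type*} [NormedField 𝕜]
    [NormedAddCommGroup E] [NormedSpace ℝ E] [NormedSpace 𝕜 E] [SMulCommClass ℝ 𝕜 E]
    {φ : ℝ → 𝕜} {h : ℝ → E} (hφ : ContinuousOn φ (Icc 0 1)) (hh : IntegrableOn h (Ioi 0)) :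
    Tendsto (fun R => ∫ x in 0..R, φ (x / R) • h x) atTop (𝓝 (φ 0 • ∫ x in Ioi 0, h x)) := by
  have hmaps (R : ℝ) : MapsTo (· / R) (Ioc 0 R) (Icc 0 1) :=
    (mapsTo_div_Icc_Icc_zero_one R).mono_left Ioc_subset_Icc_self
  have hmeas (R : ℝ) : AEStronglyMeasurable ((Ioc 0 R).indicator fun x => φ (x / R) • h x)
      (volume.restrict (Ioi 0)) := by
    rw [aestronglyMeasurable_indicator_iff measurableSet_Ioc,
      Measure.restrict_restrict_of_subset Ioc_subset_Ioi_self]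
    exact ((hφ.comp (by fun_prop) (hmaps R)).aestronglyMeasurable measurableSet_Ioc).smul
      (hh.aestronglyMeasurable.mono_set Ioc_subset_Ioi_self)
  obtain ⟨C, hC⟩ := isCompact_Icc.exists_bound_of_continuousOn hφ
  have hC₀ : 0 ≤ C := (norm_nonneg _).trans (hC 0 (by simp))
  have hbound (R x : ℝ) : ‖(Ioc 0 R).indicator (fun x => φ (x / R) • h x) x‖ ≤ C * ‖h x‖ := by
    rw [norm_indicator_eq_indicator_norm]
    refine indicator_apply_le' (fun hx => ?_) fun _ => by positivity
    rw [norm_smul]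
    gcongr
    exact hC _ (hmaps R hx)
  have hlim : ∀ᵐ x ∂volume.restrict (Ioi 0), Tendsto
      (fun R => (Ioc 0 R).indicator (fun y => φ (y / R) • h y) x) atTop (𝓝 (φ 0 • h x)) :=
    (ae_restrict_mem measurableSet_Ioi).mono fun _ hx =>
      tendsto_indicator_Ioc_comp_div_smul (hφ 0 (by simp)) h hx
  have hdominated := tendsto_integral_filter_of_dominated_convergence (fun x => C * ‖h x‖)
    (.of_forall hmeas) (.of_forall fun R => ae_of_all _ (hbound R)) (hh.norm.const_mul C) hlim
  rw [integral_smul] at hdominated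
  refine hdominated.congr' ?_
  filter_upwards [eventually_ge_atTop 0] with R hR
  rw [intervalIntegral.integral_of_le hR, setIntegral_indicator measurableSet_Ioc,
    inter_eq_right.2 Ioc_subset_Ioi_self]

section AngularFourier

variable {E : Type*} [NormedAddCommGroup E] [NormedSpace ℂ E]

/-- The Fourier transform `f̂(ω) = ∫ f(t) e^{−iωt} dt` in terms of the angular frequency `ω`,
whereas Mathlib's `𝓕` uses the ordinary frequency `ω / 2π`. -/
noncomputable def angularFourier (f : ℝ → E) (ω : ℝ) : E :=
  ∫ t : ℝ, Complex.exp (-Complex.I * ω * t) • f t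

theorem angularFourier_eq_fourier (f : ℝ → E) (ω : ℝ) :
    angularFourier f ω = 𝓕 f (ω / (2 * Real.pi)) := by
  rw [Real.fourier_real_eq_integral_exp_smul, angularFourier]
  congr! 4 with t
  have hpi : (Real.pi : ℂ) ≠ 0 := by exact_mod_cast Real.pi_ne_zero
  push_cast
  field_simp

theorem integrable_angularFourier_iff (f : ℝ → E) :
    Integrable (angularFourier f) ↔ Integrable (𝓕 f) := by
  rw [funext (angularFourier_eq_fourier f)]
  exact integrable_comp_div_iff _ (by positivity)

theorem integrable_angularFourier_schwartzMap (f : 𝓢(ℝ, E)) : Integrable (angularFourier f) :=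
  (integrable_angularFourier_iff f).2 (𝓕 f).integrable

theorem integral_intervalIntegral_exp_smul [CompleteSpace E] {φ : ℝ → ℂ} {f : ℝ → E} {a b : ℝ}
    (hφ : IntervalIntegrable φ volume a b) (hf : Integrable f) :
    ∫ t : ℝ, (∫ ω in a..b, φ ω * Complex.exp (-Complex.I * ω * t)) • f t =
      ∫ ω in a..b, φ ω • angularFourier f ω := by
  have hflip := VectorFourier.integral_fourierIntegral_smul_eq_flip (L := LinearMap.mul ℝ ℝ)
    Real.continuous_probChar (by fun_prop) (intervalIntegrable_iff.1 hφ) hf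
  have hexp (ω t : ℝ) :
      Complex.exp (-(ω * t : ℝ) * Complex.I) = Complex.exp (-Complex.I * ω * t) := by
    push_cast
    ring_nf
  simp only [VectorFourier.fourierIntegral_probChar, LinearMap.flip_apply, LinearMap.mul_apply',
    hexp, smul_eq_mul, mul_comm (Complex.exp _)] at hflip
  simp_rw [intervalIntegral.intervalIntegral_eq_integral_uIoc, smul_assoc, integral_smul]
  exact congrArg _ hflip

theorem tendsto_integral_intervalIntegral_comp_div_exp_smul [CompleteSpace E] {φ : ℝ → ℂ}
    {f : ℝ → E} (hφ : ContinuousOn φ (Icc 0 1)) (hf : Integrable f)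
    (hf' : IntegrableOn (angularFourier f) (Ioi 0)) :
    Tendsto
      (fun R : ℝ => ∫ t : ℝ,
        (∫ ω in 0..R, φ (ω / R) * Complex.exp (-Complex.I * ω * t)) • f t)
      atTop (𝓝 (φ 0 • ∫ ω in Ioi 0, angularFourier f ω)) := by
  refine (tendsto_intervalIntegral_comp_div_smul hφ hf').congr' ?_
  filter_upwards [eventually_ge_atTop 0] with R hR
  refine (integral_intervalIntegral_exp_smul ?_ hf).symm
  refine ContinuousOn.intervalIntegrable_of_Icc hR ?_
  exact hφ.comp (by fun_prop) (mapsTo_div_Icc_Icc_zero_one R)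

theorem flat_coupling_large_cutoff_limit_general [CompleteSpace E] (n : ℕ) {f : ℝ → E}
    (hf : Integrable f) (hf' : IntegrableOn (angularFourier f) (Ioi 0)) :
    Tendsto (fun ωc : ℝ => ∫ t : ℝ, chainCoupling n ωc t • f t) atTop
      (𝓝 ((-1 : ℂ) ^ n • ∫ ω in Ioi 0, angularFourier f ω)) := by
  have hcont : Continuous fun x : ℝ => (legendre n (2 * x - 1) : ℂ) :=
    Complex.continuous_ofReal.comp ((continuous_legendre n).comp (by fun_prop))
  simpa [chainCoupling, mul_div_assoc, legendre_neg_one] using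
    tendsto_integral_intervalIntegral_comp_div_exp_smul hcont.continuousOn hf hf'

end AngularFourier

/-- For a Schwartz function `f` with Fourier transform `f̂(ω) = ∫ f(t) e^{−iωt} dt`,
the flat-spectral-density chain coupling tested against `f` satisfies
`lim_{ω_c → ∞} ∫ f(t) γ_n^M(t) dt = (−1)^n ∫₀^∞ f̂(ω) dω`. -/
theorem flat_coupling_large_cutoff_limit (n : ℕ) (f : SchwartzMap ℝ ℂ) :
    Tendsto
      (fun ωc : ℝ => ∫ t : ℝ, f t *
        (∫ ω in (0 : ℝ)..ωc, (legendre n (2 * ω / ωc - 1) : ℂ)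
            * Complex.exp (-Complex.I * ω * t)))
      atTop
      (nhds ((-1 : ℂ) ^ n
        * ∫ ω in Set.Ioi (0 : ℝ), ∫ t : ℝ, f t * Complex.exp (-Complex.I * ω * t))) := by
  simpa only [chainCoupling, angularFourier, smul_eq_mul, mul_comm _ (f _)] using
    flat_coupling_large_cutoff_limit_general n f.integrable
      (integrable_angularFourier_schwartzMap f).integrableOn
end
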